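/- Suppose there exist constants M, m > 0 such that ‖B_{h,L}^{-1}(A†) A†‖_{D_k} ≤ M (operator norm induced by ‖·‖_{D_k}) and |⟨V, B_{h,L}^{-1}(A†) A† V⟩_{D_k}| ≥ m ‖V‖_{D_k}² for all V ∈ ℂ^n. Then ‖A B_{h,R}^{-1}(A)‖_{D_k^{-1}} ≤ M and |⟨A B_{h,R}^{-1}(A) W, W⟩_{D_k^{-1}}| ≥ m ‖W‖_{D_k^{-1}}² for all W ∈ ℂ^n. The same implication holds with B_{h,L}^{-1}(A†) A† replaced by B_a^{-1}(A†) A† and A B_{h,R}^{-1}(A) replaced by A B_a^{-1}(A). -/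

import Mathlib

/-!
Taking conjugate transposes of the defining formulas shows that
`(A * B_{h,R}⁻¹(A))ᴴ = B_{h,L}⁻¹(Aᴴ) * Aᴴ` (`conjTranspose_rightHybridSchwarzInv`), and likewise for
the additive preconditioner (`conjTranspose_addSchwarzInv`). Both identities use that the
restriction matrices are real, and the hybrid one also that the weight `D` is Hermitian.

It remains to see that bounds for `P` in the `D` inner product become bounds for `Pᴴ` in the `D⁻¹`
inner product (`bounds_conjTranspose_of_bounds`). The map `V ↦ D V` is an isometry from `‖·‖_D` onto
`‖·‖_{D⁻¹}`, and with `W = D V` one has `⟨Pᴴ W, W⟩_{D⁻¹} = ⟨V, P V⟩_D`, which gives the lower bound.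
For the upper bound take `V = D⁻¹ Pᴴ W`: then
`‖Pᴴ W‖²_{D⁻¹} = ⟨P V, D⁻¹ W⟩_D ≤ ‖P V‖_D ‖D⁻¹ W‖_D ≤ M ‖Pᴴ W‖_{D⁻¹} ‖W‖_{D⁻¹}` by Cauchy–Schwarz
(`norm_dotProduct_mulVec_le`), and one factor `‖Pᴴ W‖_{D⁻¹}` cancels.
-/

open Matrix Finset
open scoped ComplexOrder

/-- The additive Schwarz preconditioner `B_a⁻¹(M)`, as a function of the system matrix `M`. -/
noncomputable def addSchwarzInv {n N m : ℕ} {nl : Fin N → ℕ}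
    (R0c : Matrix (Fin m) (Fin n) ℂ)
    (Rlc : (ℓ : Fin N) → Matrix (Fin (nl ℓ)) (Fin n) ℂ)
    (M : Matrix (Fin n) (Fin n) ℂ) : Matrix (Fin n) (Fin n) ℂ :=
  R0cᵀ * (R0c * M * R0cᵀ)⁻¹ * R0c +
    ∑ ℓ, (Rlc ℓ)ᵀ * (Rlc ℓ * M * (Rlc ℓ)ᵀ)⁻¹ * Rlc ℓ

/-- The left hybrid Schwarz preconditioner `B_{h,L}⁻¹(M)`, as a function of the system
matrix `M`. -/
noncomputable def leftHybridSchwarzInv {n N m : ℕ} {nl : Fin N → ℕ}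
    (R0c : Matrix (Fin m) (Fin n) ℂ)
    (Rlc : (ℓ : Fin N) → Matrix (Fin (nl ℓ)) (Fin n) ℂ)
    (Dc : Matrix (Fin n) (Fin n) ℂ)
    (M : Matrix (Fin n) (Fin n) ℂ) : Matrix (Fin n) (Fin n) ℂ :=
  R0cᵀ * (R0c * M * R0cᵀ)⁻¹ * R0c +
    Dc⁻¹ * (1 - Mᴴ * R0cᵀ * ((R0c * M * R0cᵀ)ᴴ)⁻¹ * R0c) * Dc *
      (∑ ℓ, (Rlc ℓ)ᵀ * (Rlc ℓ * M * (Rlc ℓ)ᵀ)⁻¹ * Rlc ℓ) *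
      (1 - M * R0cᵀ * (R0c * M * R0cᵀ)⁻¹ * R0c)

/-- The right hybrid Schwarz preconditioner `B_{h,R}⁻¹(M)`, as a function of the system
matrix `M`. -/
noncomputable def rightHybridSchwarzInv {n N m : ℕ} {nl : Fin N → ℕ}
    (R0c : Matrix (Fin m) (Fin n) ℂ)
    (Rlc : (ℓ : Fin N) → Matrix (Fin (nl ℓ)) (Fin n) ℂ)
    (Dc : Matrix (Fin n) (Fin n) ℂ)
    (M : Matrix (Fin n) (Fin n) ℂ) : Matrix (Fin n) (Fin n) ℂ :=
  R0cᵀ * (R0c * M * R0cᵀ)⁻¹ * R0c +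
    (1 - R0cᵀ * (R0c * M * R0cᵀ)⁻¹ * R0c * M) *
      (∑ ℓ, (Rlc ℓ)ᵀ * (Rlc ℓ * M * (Rlc ℓ)ᵀ)⁻¹ * Rlc ℓ) *
      (1 - Dc * R0cᵀ * ((R0c * M * R0cᵀ)ᴴ)⁻¹ * R0c * Mᴴ * Dc⁻¹)

/-- The norm on `ℂⁿ` induced by a (positive-definite) weight matrix `D`:
`‖V‖_D := sqrt(Re(V† D V))`. -/
noncomputable def weightedNorm {n : ℕ} (Dc : Matrix (Fin n) (Fin n) ℂ)
    (Vv : Fin n → ℂ) : ℝ :=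
  Real.sqrt (star Vv ⬝ᵥ Dc.mulVec Vv).re

lemma conjTranspose_map_ofReal {p q : ℕ} (R : Matrix (Fin p) (Fin q) ℝ) :
    (R.map (fun x => (x : ℂ)))ᴴ = (R.map (fun x => (x : ℂ)))ᵀ := by
  ext i j
  simp

lemma posSemidef_map_ofReal {n : ℕ} {D : Matrix (Fin n) (Fin n) ℝ} (hD : D.PosDef) :
    (D.map (fun x => (x : ℂ))).PosSemidef := by
  open scoped MatrixOrder in
  obtain ⟨B, rfl⟩ := CStarAlgebra.nonneg_iff_eq_star_mul_self.mp hD.posSemidef.nonneg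
  have h : (star B * B).map (fun x => (x : ℂ)) =
      (B.map (fun x => (x : ℂ)))ᴴ * B.map (fun x => (x : ℂ)) := by
    ext i j
    simp [Matrix.mul_apply]
  rw [h]
  exact posSemidef_conjTranspose_mul_self _

lemma isUnit_map_ofReal {n : ℕ} {D : Matrix (Fin n) (Fin n) ℝ} (hD : D.PosDef) :
    IsUnit (D.map (fun x => (x : ℂ))) :=
  hD.isUnit.map (Complex.ofRealHom.mapMatrix (m := Fin n))

lemma weightedNorm_nonneg {n : ℕ} (D : Matrix (Fin n) (Fin n) ℂ) (V : Fin n → ℂ) :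
    0 ≤ weightedNorm D V :=
  Real.sqrt_nonneg _

/-- The Cauchy–Schwarz inequality for the weighted inner product. -/
lemma norm_dotProduct_mulVec_le {n : ℕ} {D : Matrix (Fin n) (Fin n) ℂ} (hD : D.PosSemidef)
    (U V : Fin n → ℂ) :
    ‖star U ⬝ᵥ D *ᵥ V‖ ≤ weightedNorm D U * weightedNorm D V := by
  open scoped MatrixOrder in
  obtain ⟨B, rfl⟩ := CStarAlgebra.nonneg_iff_eq_star_mul_self.mp hD.nonneg
  have key : ∀ X Y : Fin n → ℂ, star X ⬝ᵥ (star B * B) *ᵥ Y =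
      inner ℂ (WithLp.toLp 2 (B *ᵥ X)) (WithLp.toLp 2 (B *ᵥ Y)) := by
    intro X Y
    rw [EuclideanSpace.inner_toLp_toLp, dotProduct_comm (B *ᵥ Y), star_mulVec,
      ← dotProduct_mulVec, mulVec_mulVec, star_eq_conjTranspose]
  have hn : ∀ X : Fin n → ℂ, weightedNorm (star B * B) X = ‖WithLp.toLp 2 (B *ᵥ X)‖ := by
    intro X
    rw [weightedNorm, key, norm_eq_sqrt_re_inner (𝕜 := ℂ)]
    rfl
  rw [key, hn, hn]
  exact norm_inner_le_norm _ _

lemma weightedNorm_sq {n : ℕ} {D : Matrix (Fin n) (Fin n) ℂ} (hD : D.PosSemidef)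
    (V : Fin n → ℂ) : weightedNorm D V ^ 2 = (star V ⬝ᵥ D *ᵥ V).re :=
  Real.sq_sqrt (hD.re_dotProduct_nonneg V)

/-- `V ↦ D⁻¹ V` is an isometry from the norm with weight `D⁻¹` to the norm with weight `D`. -/
lemma weightedNorm_inv_mulVec {n : ℕ} {D : Matrix (Fin n) (Fin n) ℂ} (hD : D.IsHermitian)
    (hu : IsUnit D) (W : Fin n → ℂ) : weightedNorm D (D⁻¹ *ᵥ W) = weightedNorm D⁻¹ W := by
  rw [weightedNorm, weightedNorm, mulVec_mulVec,
    mul_nonsing_inv _ ((isUnit_iff_isUnit_det _).mp hu), one_mulVec, star_mulVec, hD.inv.eq,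
    ← dotProduct_mulVec]

/-- Norm and field-of-values bounds for `P` with weight `D` pass to `Q = Pᴴ` with weight `D⁻¹`. -/
lemma bounds_conjTranspose_of_bounds {n : ℕ} {D P Q : Matrix (Fin n) (Fin n) ℂ}
    (hD : D.PosSemidef) (hu : IsUnit D) (hQ : Qᴴ = P) {Mbd mbd : ℝ}
    (h : (∀ V : Fin n → ℂ, weightedNorm D (P *ᵥ V) ≤ Mbd * weightedNorm D V) ∧
      ∀ V : Fin n → ℂ, mbd * weightedNorm D V ^ 2 ≤ ‖star (P *ᵥ V) ⬝ᵥ D *ᵥ V‖)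
    (W : Fin n → ℂ) :
    weightedNorm D⁻¹ (Q *ᵥ W) ≤ Mbd * weightedNorm D⁻¹ W ∧
      mbd * weightedNorm D⁻¹ W ^ 2 ≤ ‖star W ⬝ᵥ D⁻¹ *ᵥ (Q *ᵥ W)‖ := by
  obtain ⟨h1, h2⟩ := h
  have hdet := (isUnit_iff_isUnit_det _).mp hu
  have hiso := weightedNorm_inv_mulVec hD.isHermitian hu
  have hQ' : Pᴴ = Q := by rw [← hQ, conjTranspose_conjTranspose]
  have hDD : ∀ X : Fin n → ℂ, D *ᵥ (D⁻¹ *ᵥ X) = X := fun X => by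
    rw [mulVec_mulVec, mul_nonsing_inv _ hdet, one_mulVec]
  constructor
  · have hsq : weightedNorm D⁻¹ (Q *ᵥ W) ^ 2 ≤
        Mbd * weightedNorm D⁻¹ (Q *ᵥ W) * weightedNorm D⁻¹ W := by
      have e : star (D⁻¹ *ᵥ (Q *ᵥ W)) ⬝ᵥ D *ᵥ (D⁻¹ *ᵥ (Q *ᵥ W)) =
          star (P *ᵥ (D⁻¹ *ᵥ (Q *ᵥ W))) ⬝ᵥ D *ᵥ (D⁻¹ *ᵥ W) := by
        rw [hDD, hDD, star_mulVec P, hQ', ← dotProduct_mulVec]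
      calc weightedNorm D⁻¹ (Q *ᵥ W) ^ 2
          = (star (P *ᵥ (D⁻¹ *ᵥ (Q *ᵥ W))) ⬝ᵥ D *ᵥ (D⁻¹ *ᵥ W)).re := by
            rw [← hiso, weightedNorm_sq hD, e]
        _ ≤ ‖star (P *ᵥ (D⁻¹ *ᵥ (Q *ᵥ W))) ⬝ᵥ D *ᵥ (D⁻¹ *ᵥ W)‖ := Complex.re_le_norm _
        _ ≤ weightedNorm D (P *ᵥ (D⁻¹ *ᵥ (Q *ᵥ W))) * weightedNorm D (D⁻¹ *ᵥ W) :=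
            norm_dotProduct_mulVec_le hD _ _
        _ ≤ Mbd * weightedNorm D (D⁻¹ *ᵥ (Q *ᵥ W)) * weightedNorm D (D⁻¹ *ᵥ W) :=
            mul_le_mul_of_nonneg_right (h1 _) (weightedNorm_nonneg _ _)
        _ = _ := by rw [hiso, hiso]
    rcases (weightedNorm_nonneg D⁻¹ (Q *ᵥ W)).eq_or_lt with h0 | h0
    · -- if `Q W` vanishes in norm, nonnegativity of `Mbd * ‖W‖` comes from `h1` at `D⁻¹ W`
      rw [← h0, ← hiso]
      exact (weightedNorm_nonneg _ _).trans (h1 _)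
    · exact le_of_mul_le_mul_left (by linarith) h0
  · have e : star (P *ᵥ (D⁻¹ *ᵥ W)) ⬝ᵥ D *ᵥ (D⁻¹ *ᵥ W) = star W ⬝ᵥ D⁻¹ *ᵥ (Q *ᵥ W) := by
      rw [hDD, star_mulVec P, hQ', star_mulVec, hD.isHermitian.inv.eq, ← dotProduct_mulVec,
        ← dotProduct_mulVec]
    have := h2 (D⁻¹ *ᵥ W)
    rwa [hiso, e] at this

/-- For a restriction matrix `R` with real entries (expressed by `Rᴴ = Rᵀ`), the local solve
`Rᵀ (R A Rᵀ)⁻¹ R` turns into the local solve for `Aᴴ` under conjugate transposition. -/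
lemma conjTranspose_localSolve {n p : ℕ} {R : Matrix (Fin p) (Fin n) ℂ} (hR : Rᴴ = Rᵀ)
    (A : Matrix (Fin n) (Fin n) ℂ) :
    (Rᵀ * (R * A * Rᵀ)⁻¹ * R)ᴴ = Rᵀ * (R * Aᴴ * Rᵀ)⁻¹ * R := by
  have hR' : Rᵀᴴ = R := by rw [← hR, conjTranspose_conjTranspose]
  simp only [conjTranspose_mul, conjTranspose_nonsing_inv, hR, hR', Matrix.mul_assoc]

lemma conjTranspose_addSchwarzInv {n N m : ℕ} {nl : Fin N → ℕ}
    {R0 : Matrix (Fin m) (Fin n) ℂ} {Rl : (ℓ : Fin N) → Matrix (Fin (nl ℓ)) (Fin n) ℂ}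
    (h0 : R0ᴴ = R0ᵀ) (hl : ∀ ℓ, (Rl ℓ)ᴴ = (Rl ℓ)ᵀ) (A : Matrix (Fin n) (Fin n) ℂ) :
    (addSchwarzInv R0 Rl A)ᴴ = addSchwarzInv R0 Rl Aᴴ := by
  simp only [addSchwarzInv, conjTranspose_add, conjTranspose_sum, conjTranspose_localSolve h0,
    conjTranspose_localSolve (hl _)]

/-- Conjugate transposition exchanges the right hybrid preconditioner for `A` and the left hybrid
preconditioner for `Aᴴ`. -/
lemma conjTranspose_rightHybridSchwarzInv {n N m : ℕ} {nl : Fin N → ℕ}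
    {R0 : Matrix (Fin m) (Fin n) ℂ} {Rl : (ℓ : Fin N) → Matrix (Fin (nl ℓ)) (Fin n) ℂ}
    (h0 : R0ᴴ = R0ᵀ) (hl : ∀ ℓ, (Rl ℓ)ᴴ = (Rl ℓ)ᵀ) {D : Matrix (Fin n) (Fin n) ℂ}
    (hD : D.IsHermitian) (hu : IsUnit D) (A : Matrix (Fin n) (Fin n) ℂ) :
    (rightHybridSchwarzInv R0 Rl D A)ᴴ = leftHybridSchwarzInv R0 Rl D Aᴴ := by
  have h0' : R0ᵀᴴ = R0 := by rw [← h0, conjTranspose_conjTranspose]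
  have hS : (∑ ℓ, (Rl ℓ)ᵀ * (Rl ℓ * A * (Rl ℓ)ᵀ)⁻¹ * Rl ℓ)ᴴ =
      ∑ ℓ, (Rl ℓ)ᵀ * (Rl ℓ * Aᴴ * (Rl ℓ)ᵀ)⁻¹ * Rl ℓ := by
    simp only [conjTranspose_sum, conjTranspose_localSolve (hl _)]
  have hleft : (1 - D * R0ᵀ * ((R0 * A * R0ᵀ)ᴴ)⁻¹ * R0 * Aᴴ * D⁻¹)ᴴ =
      D⁻¹ * (1 - Aᴴᴴ * R0ᵀ * ((R0 * Aᴴ * R0ᵀ)ᴴ)⁻¹ * R0) * D := by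
    have hDD : D⁻¹ * D = 1 := nonsing_inv_mul _ ((isUnit_iff_isUnit_det _).mp hu)
    simp only [conjTranspose_sub, conjTranspose_one, conjTranspose_mul,
      conjTranspose_nonsing_inv, conjTranspose_conjTranspose, h0, h0', hD.eq, Matrix.mul_sub,
      Matrix.sub_mul, Matrix.mul_one, hDD, Matrix.mul_assoc]
  have hright : (1 - R0ᵀ * (R0 * A * R0ᵀ)⁻¹ * R0 * A)ᴴ =
      1 - Aᴴ * R0ᵀ * (R0 * Aᴴ * R0ᵀ)⁻¹ * R0 := by
    rw [conjTranspose_sub, conjTranspose_one, conjTranspose_mul, conjTranspose_localSolve h0]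
    simp only [Matrix.mul_assoc]
  rw [rightHybridSchwarzInv, leftHybridSchwarzInv, conjTranspose_add, conjTranspose_localSolve h0,
    conjTranspose_mul _ (1 - D * _ * _ * _ * _ * _), hleft,
    conjTranspose_mul (1 - _), hS, hright]
  simp only [Matrix.mul_assoc]

/-- Norm and field-of-values bounds for `B_{h,L}⁻¹(A†) A†` in the
`D_k` inner product transfer to `A B_{h,R}⁻¹(A)` in the `D_k⁻¹` inner product, and
likewise for the additive preconditioner. -/
theorem schwarz_right_preconditioner_bounds_from_left
    {n N m : ℕ} {nl : Fin N → ℕ}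
    -- the system matrix `A`, invertible
    (A : Matrix (Fin n) (Fin n) ℂ) (hA : IsUnit A)
    -- the restriction matrices are real
    (R0 : Matrix (Fin m) (Fin n) ℝ)
    (R0c : Matrix (Fin m) (Fin n) ℂ) (hR0c : R0c = R0.map (fun x => (x : ℂ)))
    (Rl : (ℓ : Fin N) → Matrix (Fin (nl ℓ)) (Fin n) ℝ)
    (Rlc : (ℓ : Fin N) → Matrix (Fin (nl ℓ)) (Fin n) ℂ)
    (hRlc : ∀ ℓ, Rlc ℓ = (Rl ℓ).map (fun x => (x : ℂ)))
    -- the local matrices `A_ℓ = R_ℓ A R_ℓᵀ` are invertible, as are `R_ℓ A† R_ℓᵀ = A_ℓ†`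
    (hA0unit : IsUnit (R0c * A * R0cᵀ))
    (hAlunit : ∀ ℓ, IsUnit (Rlc ℓ * A * (Rlc ℓ)ᵀ))
    (hA0unit' : IsUnit (R0c * Aᴴ * R0cᵀ))
    (hAlunit' : ∀ ℓ, IsUnit (Rlc ℓ * Aᴴ * (Rlc ℓ)ᵀ))
    -- `D_k` is a real symmetric positive-definite matrix
    (D : Matrix (Fin n) (Fin n) ℝ) (hD : D.PosDef)
    (Dc : Matrix (Fin n) (Fin n) ℂ) (hDc : Dc = D.map (fun x => (x : ℂ)))
    -- the constants `M, m > 0`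
    (Mbd mbd : ℝ) (hMbd : 0 < Mbd) (hmbd : 0 < mbd) :
    -- hybrid version
    (((∀ Vv : Fin n → ℂ,
          weightedNorm Dc ((leftHybridSchwarzInv R0c Rlc Dc Aᴴ * Aᴴ).mulVec Vv)
            ≤ Mbd * weightedNorm Dc Vv) ∧
        (∀ Vv : Fin n → ℂ,
          mbd * weightedNorm Dc Vv ^ 2
            ≤ ‖star ((leftHybridSchwarzInv R0c Rlc Dc Aᴴ * Aᴴ).mulVec Vv) ⬝ᵥ
                Dc.mulVec Vv‖)) →
      ∀ Wv : Fin n → ℂ,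
        weightedNorm Dc⁻¹ ((A * rightHybridSchwarzInv R0c Rlc Dc A).mulVec Wv)
            ≤ Mbd * weightedNorm Dc⁻¹ Wv ∧
          mbd * weightedNorm Dc⁻¹ Wv ^ 2
            ≤ ‖star Wv ⬝ᵥ
                Dc⁻¹.mulVec ((A * rightHybridSchwarzInv R0c Rlc Dc A).mulVec Wv)‖) ∧
    -- additive version
    (((∀ Vv : Fin n → ℂ,
          weightedNorm Dc ((addSchwarzInv R0c Rlc Aᴴ * Aᴴ).mulVec Vv)
            ≤ Mbd * weightedNorm Dc Vv) ∧
        (∀ Vv : Fin n → ℂ,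
          mbd * weightedNorm Dc Vv ^ 2
            ≤ ‖star ((addSchwarzInv R0c Rlc Aᴴ * Aᴴ).mulVec Vv) ⬝ᵥ Dc.mulVec Vv‖)) →
      ∀ Wv : Fin n → ℂ,
        weightedNorm Dc⁻¹ ((A * addSchwarzInv R0c Rlc A).mulVec Wv)
            ≤ Mbd * weightedNorm Dc⁻¹ Wv ∧
          mbd * weightedNorm Dc⁻¹ Wv ^ 2
            ≤ ‖star Wv ⬝ᵥ Dc⁻¹.mulVec ((A * addSchwarzInv R0c Rlc A).mulVec Wv)‖) := by
  have h0 : R0cᴴ = R0cᵀ := by rw [hR0c, conjTranspose_map_ofReal]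
  have hl : ∀ ℓ, (Rlc ℓ)ᴴ = (Rlc ℓ)ᵀ := fun ℓ => by rw [hRlc, conjTranspose_map_ofReal]
  have hDp : Dc.PosSemidef := hDc ▸ posSemidef_map_ofReal hD
  have hDu : IsUnit Dc := hDc ▸ isUnit_map_ofReal hD
  refine ⟨bounds_conjTranspose_of_bounds hDp hDu ?_, bounds_conjTranspose_of_bounds hDp hDu ?_⟩
  · rw [conjTranspose_mul, conjTranspose_rightHybridSchwarzInv h0 hl hDp.isHermitian hDu]
  · rw [conjTranspose_mul, conjTranspose_addSchwarzInv h0 hl]
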